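/- If G is an outerplanar graph, then the cut monoid M_G is normal. -/

import Mathlib

/-!
Normality holds because graphs without `K₄` minor can be dismantled through vertices of degree at
most two, and along each such step an integer point of the cut cone with the right parities can be
carried over to the smaller graph.

Write a point as `(y, d)`. In a closed walk, mark some of the steps as flips; let an unmarked step
along `e` cost `y e` and a flip cost `d - y e`. If `(y, d)` has a multiple in the cut monoid, then
`0 ≤ y e ≤ d` and every closed walk with an odd number of flips costs at least `d`
(`bounds_of_mem_cutMonoid`): these conditions are linear, and for a single cut with `d = 1` such a
walk has odd, nonnegative cost. If `(y, d)` lies in the group generated by the cuts, then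
`y (uv) ≡ s u + s v` modulo `2` for some function `s` on the vertices (`parity_of_mem_cutGroup`).
The structure `CutFeasible` collects these conditions, and `CutFeasible.exists_cuts` shows that,
without `K₄` minor, they make `(y, d)` a sum of `d` cuts. This is by induction on the number of
non-isolated vertices, and rests on three facts.

* A finite graph with an edge whose non-isolated vertices all have degree at least three has a `K₄`
  minor (`k4_of_minDegree`); this comes from rotating the initial segment of a longest path. So
  there is a vertex `v` with one neighbour, or with exactly two neighbours `a` and `b`.
* In the second case, a value `t` can be chosen for `ab` so that the conditions persist after adding
  the edge `ab` (`CutFeasible.exists_value`, `CutFeasible.add_edge`). Walks from `a` to `b` bound `t`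
  from below and above, and these bounds have the parity required of `t`, so that there is an
  integer to choose, also under the extra constraint `0 ≤ t ≤ d`; a walk using the new edge several times either costs at least `d` or can be shortened
  (`FlipWalk.reduce`). The induction applies to `G - v + ab`, which is a minor of `G`.
* Given cuts for `G - v + ab`, the vertex `v` can be placed in each of them so that the counts for
  `va` and `vb` come out right, by the triangle inequalities among `va`, `vb`, `ab`
  (`exists_glue`).
-/


/-! Basic definitions for cut monoids of finite simple graphs. -/

open Classical in
/-- The cut vector of a vertex set `A`, as a function on `Sym2 V`:
value `1` on pairs with exactly one element in `A`, and `0` otherwise. -/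
noncomputable def cutVec {V : Type} (A : Set V) : Sym2 V → ℤ :=
  Sym2.lift ⟨fun v w => if ((v ∈ A) ↔ (w ∈ A)) then 0 else 1,
    fun v w => if_congr iff_comm rfl rfl⟩

variable {V : Type}

/-- The generators `(δ_A, 1)` of the cut monoid of `G`. -/
def cutGens (G : SimpleGraph V) : Set ((G.edgeSet → ℤ) × ℤ) :=
  {p | ∃ A : Set V, p = (fun e => cutVec A e.1, 1)}

/-- The cut monoid `M_G` of a graph `G`. -/
def cutMonoid (G : SimpleGraph V) : AddSubmonoid ((G.edgeSet → ℤ) × ℤ) :=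
  AddSubmonoid.closure (cutGens G)

/-- The group `gp(M_G)` generated by the cut monoid. -/
def cutGroup (G : SimpleGraph V) : AddSubgroup ((G.edgeSet → ℤ) × ℤ) :=
  AddSubgroup.closure (cutGens G)

/-- `M_G` is normal: every `x ∈ gp(M_G)` with `n • x ∈ M_G` for some `n ≥ 1` lies in `M_G`. -/
def CutNormal (G : SimpleGraph V) : Prop :=
  ∀ x ∈ cutGroup G, (∃ n : ℕ, 1 ≤ n ∧ n • x ∈ cutMonoid G) → x ∈ cutMonoid G

/-- `M_G` is seminormal: every `x ∈ gp(M_G)` with `2 • x ∈ M_G` and `3 • x ∈ M_G`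
lies in `M_G`. -/
def CutSeminormal (G : SimpleGraph V) : Prop :=
  ∀ x ∈ cutGroup G, 2 • x ∈ cutMonoid G → 3 • x ∈ cutMonoid G → x ∈ cutMonoid G

/-- Generators of the cone of `M_G`: nonnegative real multiples of the `(δ_A, 1)`. -/
noncomputable def cutConeGens (G : SimpleGraph V) : Set ((G.edgeSet → ℝ) × ℝ) :=
  {q | ∃ (c : ℝ) (A : Set V), 0 ≤ c ∧
    q = c • ((fun e => ((cutVec A e.1 : ℤ) : ℝ), (1 : ℝ)))}

/-- The cone `cone(M_G)`: all finite nonnegative real combinations of the `(δ_A, 1)`. -/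
noncomputable def cutCone (G : SimpleGraph V) : Set ((G.edgeSet → ℝ) × ℝ) :=
  (AddSubmonoid.closure (cutConeGens G) : Set ((G.edgeSet → ℝ) × ℝ))

/-- The canonical map from `ℤ^E × ℤ` to `ℝ^E × ℝ`. -/
noncomputable def toRealCut (G : SimpleGraph V) (p : (G.edgeSet → ℤ) × ℤ) :
    (G.edgeSet → ℝ) × ℝ :=
  (fun e => ((p.1 e : ℤ) : ℝ), ((p.2 : ℤ) : ℝ))

/-- `int(M_G)`: elements of `M_G` mapping into the topological interior of `cone(M_G)`. -/
noncomputable def cutInterior (G : SimpleGraph V) : Set ((G.edgeSet → ℤ) × ℤ) :=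
  {p | p ∈ cutMonoid G ∧ toRealCut G p ∈ interior (cutCone G)}

/-- The set of last coordinates `α ∈ ℕ` realized by elements of `int(M_G)`;
its least element is `m(G)`. -/
noncomputable def cutDegrees (G : SimpleGraph V) : Set ℕ :=
  {α | ∃ x : G.edgeSet → ℤ, ((x, (α : ℤ)) : (G.edgeSet → ℤ) × ℤ) ∈ cutInterior G}

/-- `H` is a minor of `G`: branch sets `B u` are nonempty, pairwise disjoint,
induce connected subgraphs, and edges of `H` are witnessed by edges of `G`. -/
def GraphMinor {W V : Type} (H : SimpleGraph W) (G : SimpleGraph V) : Prop :=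
  ∃ B : W → Set V,
    (∀ u, (B u).Nonempty) ∧
    (∀ u v, u ≠ v → Disjoint (B u) (B v)) ∧
    (∀ u, (G.induce (B u)).Connected) ∧
    (∀ u v, H.Adj u v → ∃ a ∈ B u, ∃ b ∈ B v, G.Adj a b)

/-- `G` is `K₅`-minor-free. -/
def K5Free (G : SimpleGraph V) : Prop :=
  ¬ GraphMinor (⊤ : SimpleGraph (Fin 5)) G

/-- `G` is bipartite: vertices split into two parts so every edge joins the parts. -/
def BipartiteG (G : SimpleGraph V) : Prop :=
  ∃ s : Set V, ∀ ⦃v w⦄, G.Adj v w → ((v ∈ s ∧ w ∉ s) ∨ (w ∈ s ∧ v ∉ s))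

/-- `G` has an induced cycle of length `n` (n ≥ 3): an induced-subgraph copy of the
cycle graph of length `n`. -/
def HasInducedCycleLen (G : SimpleGraph V) (n : ℕ) : Prop :=
  3 ≤ n ∧ Nonempty (SimpleGraph.cycleGraph n ↪g G)

/-- `G` contains a triangle. -/
def HasTriangle (G : SimpleGraph V) : Prop :=
  ∃ a b c, G.Adj a b ∧ G.Adj b c ∧ G.Adj a c

/-- `G` is chordal: every induced cycle is a triangle. -/
def ChordalG (G : SimpleGraph V) : Prop :=
  ∀ n, HasInducedCycleLen G n → n = 3

/-- `G` is bridgeless: every edge lies on some cycle. -/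
def BridgelessG (G : SimpleGraph V) : Prop :=
  ∀ e ∈ G.edgeSet, ∃ (v : V) (c : G.Walk v v), c.IsCycle ∧ e ∈ c.edges

/-- `G` is (isomorphic to) a cycle of length `n`. -/
def IsCycleOfLen (G : SimpleGraph V) (n : ℕ) : Prop :=
  3 ≤ n ∧ Nonempty (G ≃g SimpleGraph.cycleGraph n)

/-- `G` is a cycle. -/
def IsCycleGraph (G : SimpleGraph V) : Prop :=
  ∃ n, IsCycleOfLen G n

/-- `G` is a `0`-sum of `G1` and `G2`: copies of `G1`, `G2` cover `G`,
overlap in exactly one vertex, and every edge comes from `G1` or `G2`. -/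
def IsZeroSumDecomp {V1 V2 : Type} (G : SimpleGraph V) (G1 : SimpleGraph V1)
    (G2 : SimpleGraph V2) : Prop :=
  ∃ (f1 : V1 ↪ V) (f2 : V2 ↪ V),
    Set.range f1 ∪ Set.range f2 = Set.univ ∧
    (∃ v, Set.range f1 ∩ Set.range f2 = {v}) ∧
    (∀ a b, G.Adj a b ↔
      ((∃ x y, f1 x = a ∧ f1 y = b ∧ G1.Adj x y) ∨
       (∃ x y, f2 x = a ∧ f2 y = b ∧ G2.Adj x y)))

/-- `G` is a `1`-sum of `G1` and `G2` along a common edge. -/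
def IsOneSumDecomp {V1 V2 : Type} (G : SimpleGraph V) (G1 : SimpleGraph V1)
    (G2 : SimpleGraph V2) : Prop :=
  ∃ (f1 : V1 ↪ V) (f2 : V2 ↪ V) (v w : V),
    v ≠ w ∧
    Set.range f1 ∪ Set.range f2 = Set.univ ∧
    Set.range f1 ∩ Set.range f2 = {v, w} ∧
    (∃ x y, f1 x = v ∧ f1 y = w ∧ G1.Adj x y) ∧
    (∃ x y, f2 x = v ∧ f2 y = w ∧ G2.Adj x y) ∧
    (∀ a b, G.Adj a b ↔
      ((∃ x y, f1 x = a ∧ f1 y = b ∧ G1.Adj x y) ∨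
       (∃ x y, f2 x = a ∧ f2 y = b ∧ G2.Adj x y)))

/-- Ring graphs: obtained, up to adding isolated vertices, from finitely many
(finite) trees and cycles by iterated `0`-sums and `1`-sums. -/
inductive IsRingGraph : {V : Type} → SimpleGraph V → Prop
  | tree {V : Type} (G : SimpleGraph V) :
      Finite V → G.Connected → G.IsAcyclic → IsRingGraph G
  | cycle {V : Type} (G : SimpleGraph V) : IsCycleGraph G → IsRingGraph G
  | zeroSum {V1 V2 V : Type} {G1 : SimpleGraph V1} {G2 : SimpleGraph V2}
      {G : SimpleGraph V} :
      IsRingGraph G1 → IsRingGraph G2 → IsZeroSumDecomp G G1 G2 → IsRingGraph G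
  | oneSum {V1 V2 V : Type} {G1 : SimpleGraph V1} {G2 : SimpleGraph V2}
      {G : SimpleGraph V} :
      IsRingGraph G1 → IsRingGraph G2 → IsOneSumDecomp G G1 G2 → IsRingGraph G
  | addIsolated {V W : Type} {G : SimpleGraph V} {H : SimpleGraph W} (f : V ↪ W) :
      IsRingGraph G → (∀ a b, H.Adj a b ↔ ∃ x y, f x = a ∧ f y = b ∧ G.Adj x y) →
      IsRingGraph H

/-- An edge of an induced subgraph is an edge of the ambient graph. -/
lemma induce_edge_mem (G : SimpleGraph V) (s : Set V) (e : Sym2 s)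
    (he : e ∈ (G.induce s).edgeSet) : e.map Subtype.val ∈ G.edgeSet := by
  induction e using Sym2.ind with
  | _ a b =>
    rw [Sym2.map_pair_eq, SimpleGraph.mem_edgeSet]
    exact he

/-- Restriction of a vector indexed by the edges of `G` to the edges of the
subgraph of `G` induced on `s`. -/
noncomputable def restrictCut (G : SimpleGraph V) (s : Set V) (p : G.edgeSet → ℤ) :
    (G.induce s).edgeSet → ℤ :=
  fun e => p ⟨e.1.map Subtype.val, induce_edge_mem G s e.1 e.2⟩

/-! ### Minors -/

theorem GraphMinor.mono' {W V : Type} {H : SimpleGraph W} {G' G : SimpleGraph V}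
    (h : ∀ x y, G'.Adj x y → G.Adj x y) (hm : GraphMinor H G') : GraphMinor H G := by
  obtain ⟨B, h1, h2, h3, h4⟩ := hm
  refine ⟨B, h1, h2, fun u => (h3 u).mono ?_, fun u v huv => ?_⟩
  · intro x y hxy
    exact h _ _ hxy
  · obtain ⟨a, ha, b, hb, hab⟩ := h4 u v huv
    exact ⟨a, ha, b, hb, h _ _ hab⟩

/-- The graph `G - v + ab`: the edges at `v` are deleted (leaving `v` isolated) and the edge `ab`
is added. -/
def bypass {V : Type} (G : SimpleGraph V) (v a b : V) : SimpleGraph V where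
  Adj x z := x ≠ v ∧ z ≠ v ∧ x ≠ z ∧ (G.Adj x z ∨ s(x, z) = s(a, b))
  symm := ⟨by
    rintro x z ⟨h1, h2, h3, h4⟩
    refine ⟨h2, h1, h3.symm, ?_⟩
    rw [Sym2.eq_swap]
    exact h4.imp (fun h => h.symm) id⟩
  loopless := ⟨fun x h => h.2.2.1 rfl⟩

/-- If `v` is adjacent to `a` and `b`, then `G - v + ab` is a minor of `G` (contract `va`): a
`K₄` model of the former becomes one of the latter once `v` joins the branch set of `a`. -/
theorem minor_of_bypass {V : Type} {G : SimpleGraph V} {v a b : V}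
    (ha : G.Adj v a) (hb : G.Adj v b)
    (hm : GraphMinor (⊤ : SimpleGraph (Fin 4)) (bypass G v a b)) :
    GraphMinor (⊤ : SimpleGraph (Fin 4)) G := by
  classical
  obtain ⟨B, h1, h2, h3, h4⟩ := hm
  -- `v` is isolated in `G - v + ab`, so it lies in no branch set.
  have hv : ∀ u, v ∉ B u := by
    intro u hu
    obtain ⟨u', hu'⟩ : ∃ u' : Fin 4, u ≠ u' := ⟨u + 1, by fin_cases u <;> decide⟩
    obtain ⟨x, hx, y, hy, hxy⟩ := h4 u u' hu'
    have hxv : (⟨v, hu⟩ : B u) ≠ ⟨x, hx⟩ := by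
      intro h
      exact hxy.1 (congrArg Subtype.val h).symm
    obtain ⟨p⟩ := (h3 u).preconnected ⟨v, hu⟩ ⟨x, hx⟩
    cases p with
    | nil => exact hxv rfl
    | cons h _ => exact h.1 rfl
  have hav : a ≠ v := ha.ne'
  have hbv : b ≠ v := hb.ne'
  let C : Fin 4 → Set V := fun u => {x | x ∈ B u ∨ (x = v ∧ a ∈ B u)}
  have hBC : ∀ u x, x ∈ B u → x ∈ C u := fun u x hx => Or.inl hx
  refine ⟨C, fun u => (h1 u).mono (hBC u), ?_, ?_, ?_⟩
  · intro u w huw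
    have hd := Set.disjoint_left.1 (h2 u w huw)
    rw [Set.disjoint_left]
    rintro x (hx | ⟨rfl, hx⟩) (hy | ⟨hy, hy'⟩)
    · exact hd hx hy
    · exact hv u (hy ▸ hx)
    · exact hv w hy
    · exact hd hx hy'
  · intro u
    have key : ∀ x y : B u, (((bypass G v a b).induce (B u)).Adj x y) →
        (G.induce (C u)).Reachable ⟨x, hBC u _ x.2⟩ ⟨y, hBC u _ y.2⟩ := by
      rintro ⟨x, hx⟩ ⟨y, hy⟩ ⟨_, _, _, h | h⟩
      · exact SimpleGraph.Adj.reachable (by exact h)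
      · have hau : a ∈ B u := by
          rcases Sym2.eq_iff.1 h with ⟨h, -⟩ | ⟨-, h⟩
          · exact h ▸ hx
          · exact h ▸ hy
        have hvC : v ∈ C u := Or.inr ⟨rfl, hau⟩
        have e1 : G.Adj x v ∧ G.Adj v y := by
          rcases Sym2.eq_iff.1 h with ⟨h, h'⟩ | ⟨h, h'⟩
          · obtain rfl : x = a := h
            obtain rfl : y = b := h'
            exact ⟨ha.symm, hb⟩
          · obtain rfl : x = b := h
            obtain rfl : y = a := h'
            exact ⟨hb.symm, ha⟩
        have r1 : (G.induce (C u)).Reachable ⟨x, hBC u _ hx⟩ ⟨v, hvC⟩ :=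
          SimpleGraph.Adj.reachable (by exact e1.1)
        have r2 : (G.induce (C u)).Reachable ⟨v, hvC⟩ ⟨y, hBC u _ hy⟩ :=
          SimpleGraph.Adj.reachable (by exact e1.2)
        exact r1.trans r2
    have key2 : ∀ x y : B u,
        (G.induce (C u)).Reachable ⟨x, hBC u _ x.2⟩ ⟨y, hBC u _ y.2⟩ := by
      intro x y
      obtain ⟨p⟩ := (h3 u).preconnected x y
      induction p with
      | nil => exact SimpleGraph.Reachable.refl _
      | cons h _ ih => exact (key _ _ h).trans ih
    obtain ⟨x0, hx0⟩ := h1 u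
    rw [SimpleGraph.connected_iff_exists_forall_reachable]
    refine ⟨⟨x0, hBC u _ hx0⟩, ?_⟩
    rintro ⟨y, hy | ⟨rfl, hau⟩⟩
    · exact key2 ⟨x0, hx0⟩ ⟨y, hy⟩
    · exact (key2 ⟨x0, hx0⟩ ⟨a, hau⟩).trans (SimpleGraph.Adj.reachable (by exact ha.symm))
  · intro u w huw
    obtain ⟨x, hx, y, hy, hxy⟩ := h4 u w huw
    rcases hxy with ⟨_, _, _, h | h⟩
    · exact ⟨x, hBC u _ hx, y, hBC w _ hy, h⟩
    · rcases Sym2.eq_iff.1 h with ⟨rfl, rfl⟩ | ⟨rfl, rfl⟩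
      · exact ⟨v, Or.inr ⟨rfl, hx⟩, y, hBC w _ hy, hb⟩
      · exact ⟨x, hBC u _ hx, v, Or.inr ⟨rfl, hy⟩, hb.symm⟩

/-- Four pairwise disjoint, pairwise adjacent connected sets form a `K₄` minor. -/
theorem k4_of_sets {V : Type} {G : SimpleGraph V} (B : Fin 4 → Set V)
    (hc : ∀ u, (G.induce (B u)).Connected)
    (hd : ∀ u v, u < v → Disjoint (B u) (B v))
    (ha : ∀ u v, u < v → ∃ a ∈ B u, ∃ b ∈ B v, G.Adj a b) :
    GraphMinor (⊤ : SimpleGraph (Fin 4)) G := by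
  refine ⟨B, ?_, ?_, hc, ?_⟩
  · intro u
    obtain ⟨x⟩ := (hc u).nonempty
    exact ⟨x.1, x.2⟩
  · intro u v huv
    rcases lt_or_gt_of_ne huv with h | h
    · exact hd u v h
    · exact (hd v u h).symm
  · intro u v huv
    rcases lt_or_gt_of_ne (show u ≠ v from huv) with h | h
    · exact ha u v h
    · obtain ⟨a, h1, b, h2, h3⟩ := ha v u h
      exact ⟨b, h2, a, h1, h3.symm⟩

/-! ### Minimum degree three forces a `K₄` minor -/

/-- `f 0, f 1, …, f n` is a path of `G` with `n` edges; the values of `f` beyond `n` are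
irrelevant. -/
def IsPathFun {V : Type} (G : SimpleGraph V) (f : ℕ → V) (n : ℕ) : Prop :=
  (∀ m < n, G.Adj (f m) (f (m + 1))) ∧ ∀ i ≤ n, ∀ j ≤ n, f i = f j → i = j

theorem IsPathFun.connected_Icc {V : Type} {G : SimpleGraph V} {f : ℕ → V} {n : ℕ}
    (h : IsPathFun G f n) {p q : ℕ} (hpq : p ≤ q) (hq : q ≤ n) :
    (G.induce (f '' Set.Icc p q)).Connected := by
  rw [SimpleGraph.connected_iff_exists_forall_reachable]
  refine ⟨⟨f p, p, ⟨le_rfl, hpq⟩, rfl⟩, ?_⟩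
  rintro ⟨_, m, ⟨hm1, hm2⟩, rfl⟩
  induction m, hm1 using Nat.le_induction with
  | base => exact SimpleGraph.Reachable.refl _
  | succ k hk ih =>
    exact (ih (by omega)).trans (SimpleGraph.Adj.reachable (by exact h.1 k (by omega)))

/-- In a longest path, every neighbour of the initial vertex is on the path. -/
theorem IsPathFun.nbr_mem {V : Type} {G : SimpleGraph V} {f : ℕ → V} {n : ℕ}
    (h : IsPathFun G f n) (hmax : ∀ g m, IsPathFun G g m → m ≤ n) {c : V}
    (hc : G.Adj (f 0) c) : ∃ m, 1 ≤ m ∧ m ≤ n ∧ f m = c := by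
  by_contra! hcon
  have hne : ∀ m ≤ n, f m ≠ c := by
    intro m hm
    rcases Nat.eq_zero_or_pos m with rfl | hm'
    · exact hc.ne
    · exact hcon m hm' hm
  have := hmax (fun m => if m = 0 then c else f (m - 1)) (n + 1) ⟨?_, ?_⟩
  · omega
  · intro m hm
    rcases m with _ | m
    · simpa using hc.symm
    · simpa using h.1 m (by omega)
  · intro i hi j hj hij
    rcases i with _ | i <;> rcases j with _ | j
    · rfl
    · exact absurd (by simpa using hij.symm) (hne j (by omega))
    · exact absurd (by simpa using hij) (hne i (by omega))
    · have := h.2 i (by omega) j (by omega) (by simpa using hij)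
      omega

/-- If `f 0` is adjacent to `f i`, reversing the initial segment `f 0, …, f (i - 1)` yields
another path on the same vertices. -/
theorem IsPathFun.rotate {V : Type} {G : SimpleGraph V} {f : ℕ → V} {n i : ℕ}
    (h : IsPathFun G f n) (hin : i ≤ n) (hi : G.Adj (f 0) (f i)) :
    IsPathFun G (fun m => if m < i then f (i - 1 - m) else f m) n := by
  refine ⟨?_, ?_⟩
  · intro m hm
    dsimp only
    rcases lt_trichotomy (m + 1) i with hlt | heq | hgt
    · rw [if_pos (by omega), if_pos hlt]
      have := h.1 (i - 1 - (m + 1)) (by omega)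
      rw [show i - 1 - (m + 1) + 1 = i - 1 - m by omega] at this
      exact this.symm
    · rw [if_pos (by omega), if_neg (by omega), show i - 1 - m = 0 by omega, heq]
      exact hi
    · rw [if_neg (by omega), if_neg (by omega)]
      exact h.1 m hm
  · intro j hj k hk hjk
    dsimp only at hjk
    split_ifs at hjk with h1 h2 h2
    · have := h.2 _ (by omega) _ (by omega) hjk; omega
    · have := h.2 _ (by omega) _ (by omega) hjk; omega
    · have := h.2 _ (by omega) _ (by omega) hjk; omega
    · exact h.2 _ hj _ hk hjk

/-- A longest path whose initial vertex `f 0` has neighbours `f i` and `f j`, `2 ≤ i < j`, yields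
a `K₄` minor when degrees are at least three. If an edge joins `{f 1, …, f (i - 1)}` to
`{f (i + 1), …, f n}`, the sets `{f 0}`, `{f 1, …, f (i - 1)}`, `{f i}`, `{f (i + 1), …, f n}` form
the minor. Otherwise `f (i - 1)`, which also starts a longest path, has a third neighbour `f k`
with `k ≤ i - 3`, and passing to that longest path (or keeping `f`, if `k = 0`) lowers `i`. -/
theorem k4_of_longest {V : Type} {G : SimpleGraph V}
    (hdeg : ∀ v u, G.Adj v u → ∀ a b, ∃ c, G.Adj v c ∧ c ≠ a ∧ c ≠ b) {n : ℕ}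
    (hmax : ∀ g m, IsPathFun G g m → m ≤ n) (i : ℕ) :
    ∀ f : ℕ → V, IsPathFun G f n → ∀ j, 2 ≤ i → i < j → j ≤ n →
      G.Adj (f 0) (f i) → G.Adj (f 0) (f j) → GraphMinor (⊤ : SimpleGraph (Fin 4)) G := by
  induction i using Nat.strong_induction_on with
  | _ i IH =>
  intro f hf j hi2 hij hjn hi hj
  by_cases hcross : ∃ p q, 1 ≤ p ∧ p < i ∧ i < q ∧ q ≤ n ∧ G.Adj (f p) (f q)
  · obtain ⟨p, q, hp1, hpi, hiq, hqn, hpq⟩ := hcross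
    have hdis : ∀ a b c d, b < c → d ≤ n →
        Disjoint (f '' Set.Icc a b) (f '' Set.Icc c d) := by
      intro a b c d hbc hd
      rw [Set.disjoint_left]
      rintro _ ⟨k, ⟨hk1, hk2⟩, rfl⟩ ⟨l, ⟨hl1, hl2⟩, hl⟩
      have := hf.2 l (by omega) k (by omega) hl
      omega
    have hadj : ∀ a b c d k l, a ≤ k → k ≤ b → c ≤ l → l ≤ d → G.Adj (f k) (f l) →
        ∃ x ∈ f '' Set.Icc a b, ∃ y ∈ f '' Set.Icc c d, G.Adj x y :=
      fun a b c d k l h1 h2 h3 h4 h => ⟨f k, ⟨k, ⟨h1, h2⟩, rfl⟩, f l, ⟨l, ⟨h3, h4⟩, rfl⟩, h⟩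
    have hstep := hf.1
    have hii : G.Adj (f (i - 1)) (f i) := by
      have := hf.1 (i - 1) (by omega)
      rwa [show i - 1 + 1 = i by omega] at this
    refine k4_of_sets ![f '' Set.Icc 0 0, f '' Set.Icc 1 (i - 1), f '' Set.Icc i i,
      f '' Set.Icc (i + 1) n] ?_ ?_ ?_
    · intro u
      fin_cases u <;> exact hf.connected_Icc (by omega) (by omega)
    · intro u v huv
      fin_cases u <;> fin_cases v <;> first
        | exact absurd huv (by decide)
        | exact hdis _ _ _ _ (by omega) (by omega)
    · intro u v huv
      fin_cases u <;> fin_cases v <;> first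
        | exact absurd huv (by decide)
        | skip
      · exact hadj _ _ _ _ 0 1 (by omega) (by omega) (by omega) (by omega) (hstep 0 (by omega))
      · exact hadj _ _ _ _ 0 i (by omega) (by omega) (by omega) (by omega) hi
      · exact hadj _ _ _ _ 0 j (by omega) (by omega) (by omega) (by omega) hj
      · exact hadj _ _ _ _ (i - 1) i (by omega) (by omega) (by omega) (by omega) hii
      · exact hadj _ _ _ _ p q (by omega) (by omega) (by omega) (by omega) hpq
      · exact hadj _ _ _ _ i (i + 1) (by omega) (by omega) (by omega) (by omega)
          (hstep i (by omega))
  · have hrot := hf.rotate (by omega) hi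
    set g : ℕ → V := fun m => if m < i then f (i - 1 - m) else f m with hg
    have hg0 : g 0 = f (i - 1) := by simp [hg]; omega
    have hgi : g i = f i := by simp [hg]
    have hii : G.Adj (f (i - 1)) (f i) := by
      have := hf.1 (i - 1) (by omega)
      rwa [show i - 1 + 1 = i by omega] at this
    obtain ⟨c, hc, hca, hcb⟩ := hdeg _ _ hii (f i) (f (i - 2))
    obtain ⟨m, hm1, hmn, rfl⟩ := hrot.nbr_mem hmax (hg0.symm ▸ hc)
    have hmi : m < i := by
      by_contra hcon
      have hgm : g m = f m := by simp [hg]; omega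
      rw [hgm] at hc hca
      have : m ≠ i := by rintro rfl; exact hca rfl
      exact hcross ⟨i - 1, m, by omega, by omega, by omega, hmn, hc⟩
    have hgm : g m = f (i - 1 - m) := by simp [hg, hmi]
    have hm1' : m ≠ 1 := by
      rintro rfl
      exact hcb (by rw [hgm, show i - 1 - 1 = i - 2 by omega])
    exact IH m hmi g hrot i (by omega) hmi (by omega) (hg0.symm ▸ hc)
      (by rw [hg0, hgi]; exact hii)

/-- A finite graph with an edge, in which every non-isolated vertex has degree at least three, has
a `K₄` minor. -/
theorem k4_of_minDegree {V : Type} [Finite V] {G : SimpleGraph V} {x y : V} (hxy : G.Adj x y)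
    (hdeg : ∀ v u, G.Adj v u → ∀ a b, ∃ c, G.Adj v c ∧ c ≠ a ∧ c ≠ b) :
    GraphMinor (⊤ : SimpleGraph (Fin 4)) G := by
  classical
  have := Fintype.ofFinite V
  have hbd : ∀ n, (∃ f, IsPathFun G f n) → n ≤ Fintype.card V := by
    rintro n ⟨f, hf⟩
    have := Fintype.card_le_of_injective (fun i : Fin (n + 1) => f i) (by
      intro i j hij
      exact Fin.ext (hf.2 _ (by omega) _ (by omega) hij))
    simp at this
    omega
  have h1 : ∃ f, IsPathFun G f 1 := by
    refine ⟨fun m => if m = 0 then x else y, ?_, ?_⟩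
    · intro m hm
      obtain rfl : m = 0 := by omega
      simpa using hxy
    · intro i hi j hj hij
      interval_cases i <;> interval_cases j <;> simp_all
  have hspec := Nat.findGreatest_spec (P := fun n => ∃ f, IsPathFun G f n) (hbd 1 h1) h1
  have hmax : ∀ g m, IsPathFun G g m →
      m ≤ Nat.findGreatest (fun n => ∃ f, IsPathFun G f n) (Fintype.card V) :=
    fun g m hg => Nat.le_findGreatest (hbd m ⟨g, hg⟩) ⟨g, hg⟩
  generalize Nat.findGreatest (fun n => ∃ f, IsPathFun G f n) (Fintype.card V) = n at hspec hmax
  obtain ⟨f, hf⟩ := hspec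
  have hn : 1 ≤ n := hmax _ _ h1.choose_spec
  have h01 := hf.1 0 (by omega)
  obtain ⟨c, hc, hc1, -⟩ := hdeg _ _ h01 (f 1) (f 1)
  obtain ⟨i, hi1, hin, rfl⟩ := hf.nbr_mem hmax hc
  obtain ⟨c', hc', hc1', hc2'⟩ := hdeg _ _ h01 (f 1) (f i)
  obtain ⟨j, hj1, hjn, rfl⟩ := hf.nbr_mem hmax hc'
  have a1 : i ≠ 1 := by rintro rfl; exact hc1 rfl
  have a2 : j ≠ 1 := by rintro rfl; exact hc1' rfl
  have a3 : j ≠ i := by rintro rfl; exact hc2' rfl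
  rcases lt_or_gt_of_ne a3 with h | h
  · exact k4_of_longest hdeg hmax j f hf i (by omega) h hin hc' hc
  · exact k4_of_longest hdeg hmax i f hf j (by omega) h hjn hc hc'

/-! ### Walks with flips -/

/-- `FlipWalk G y d a b k w`: there is a walk in `G` from `a` to `b` in which `k` of the steps are
marked as flips, an unmarked step along `e` costing `y e`, a flip along `e` costing `d - y e`, and
the total cost being `w`. -/
inductive FlipWalk {V : Type} (G : SimpleGraph V) (y : Sym2 V → ℤ) (d : ℤ) :
    V → V → ℕ → ℤ → Prop
  | nil (a : V) : FlipWalk G y d a a 0 0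
  | keep {a b c : V} {k : ℕ} {w : ℤ} : FlipWalk G y d a b k w → G.Adj b c →
      FlipWalk G y d a c k (w + y s(b, c))
  | flip {a b c : V} {k : ℕ} {w : ℤ} : FlipWalk G y d a b k w → G.Adj b c →
      FlipWalk G y d a c (k + 1) (w + (d - y s(b, c)))

namespace FlipWalk

variable {V : Type} {G : SimpleGraph V} {y : Sym2 V → ℤ} {d : ℤ}

theorem trans {a b c : V} {k l : ℕ} {w w' : ℤ} (h : FlipWalk G y d a b k w)
    (h' : FlipWalk G y d b c l w') : FlipWalk G y d a c (k + l) (w + w') := by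
  induction h' with
  | nil => simpa using h
  | keep _ hadj ih => rw [← add_assoc]; exact ih.keep hadj
  | flip _ hadj ih => rw [← add_assoc, ← add_assoc]; exact ih.flip hadj

theorem keep_one {a b : V} (h : G.Adj a b) : FlipWalk G y d a b 0 (y s(a, b)) := by
  simpa using (FlipWalk.nil a).keep h

theorem flip_one {a b : V} (h : G.Adj a b) : FlipWalk G y d a b 1 (d - y s(a, b)) := by
  simpa using (FlipWalk.nil a).flip h

theorem symm {a b : V} {k : ℕ} {w : ℤ} (h : FlipWalk G y d a b k w) :
    FlipWalk G y d b a k w := by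
  induction h with
  | nil => exact .nil _
  | keep _ hadj ih =>
    have := (keep_one (y := y) (d := d) hadj.symm).trans ih
    rw [Sym2.eq_swap] at this
    convert this using 1 <;> ring
  | flip _ hadj ih =>
    have := (flip_one (y := y) (d := d) hadj.symm).trans ih
    rw [Sym2.eq_swap] at this
    convert this using 1 <;> ring

theorem nonneg {a b : V} {k : ℕ} {w : ℤ} (h : FlipWalk G y d a b k w)
    (hy : ∀ e ∈ G.edgeSet, 0 ≤ y e ∧ y e ≤ d) : 0 ≤ w := by
  induction h with
  | nil => exact le_rfl
  | keep _ hadj ih => have := hy _ (G.mem_edgeSet.2 hadj); omega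
  | flip _ hadj ih => have := hy _ (G.mem_edgeSet.2 hadj); omega

theorem parity {a b : V} {k : ℕ} {w : ℤ} (h : FlipWalk G y d a b k w) {s : V → ℤ}
    (hs : ∀ a b, G.Adj a b → 2 ∣ y s(a, b) - s a - s b) :
    2 ∣ w - s a - s b - k * d := by
  induction h with
  | nil => exact ⟨-s a, by push_cast; ring⟩
  | @keep b c k w _ hadj ih =>
    obtain ⟨p, hp⟩ := ih
    obtain ⟨q, hq⟩ := hs _ _ hadj
    exact ⟨p + q + s b, by linear_combination hp + hq⟩
  | @flip b c k w _ hadj ih =>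
    obtain ⟨p, hp⟩ := ih
    obtain ⟨q, hq⟩ := hs _ _ hadj
    exact ⟨p - q - s c, by push_cast; linear_combination hp - hq⟩

/-- Costs of walks are additive in `(y, d)`. -/
theorem split {a b : V} {k : ℕ} {w : ℤ} (h : FlipWalk G y d a b k w) {y1 y2 : Sym2 V → ℤ}
    {d1 d2 : ℤ} (hy : ∀ e ∈ G.edgeSet, y e = y1 e + y2 e) (hd : d = d1 + d2) :
    ∃ w1 w2, w = w1 + w2 ∧ FlipWalk G y1 d1 a b k w1 ∧ FlipWalk G y2 d2 a b k w2 := by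
  induction h with
  | nil => exact ⟨0, 0, by simp, .nil _, .nil _⟩
  | keep _ hadj ih =>
    obtain ⟨w1, w2, hw, h1, h2⟩ := ih
    have := hy _ (G.mem_edgeSet.2 hadj)
    exact ⟨_, _, by omega, h1.keep hadj, h2.keep hadj⟩
  | flip _ hadj ih =>
    obtain ⟨w1, w2, hw, h1, h2⟩ := ih
    have := hy _ (G.mem_edgeSet.2 hadj)
    exact ⟨_, _, by omega, h1.flip hadj, h2.flip hadj⟩

/-- Costs of walks are homogeneous in `(y, d)`. -/
theorem scale {a b : V} {k : ℕ} {w : ℤ} (h : FlipWalk G y d a b k w) {y' : Sym2 V → ℤ} {n : ℤ}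
    (hy : ∀ e ∈ G.edgeSet, y' e = n * y e) : FlipWalk G y' (n * d) a b k (n * w) := by
  induction h with
  | nil => rw [mul_zero]; exact .nil _
  | keep _ hadj ih =>
    rw [mul_add, ← hy _ (G.mem_edgeSet.2 hadj)]
    exact ih.keep hadj
  | flip _ hadj ih =>
    rw [mul_add, mul_sub, ← hy _ (G.mem_edgeSet.2 hadj)]
    exact ih.flip hadj

end FlipWalk

/-! ### Integer points of the cut cone and adding an edge -/

/-- Conditions on `(y, d)` that hold for every integer point of the cone of the cut monoid lying in
the group generated by the cuts (and that characterize these points on graphs without `K₄` minor,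
by `CutFeasible.exists_cuts`): `y` lies between `0` and `d`, agrees modulo `2` with a sum `s a + s b` over the ends
of each edge, and every closed walk with an odd number of flips costs at least `d`. -/
structure CutFeasible {V : Type} (G : SimpleGraph V) (y : Sym2 V → ℤ) (d : ℤ) : Prop where
  nonneg : 0 ≤ d
  bounds : ∀ e ∈ G.edgeSet, 0 ≤ y e ∧ y e ≤ d
  parity : ∃ s : V → ℤ, ∀ a b, G.Adj a b → 2 ∣ y s(a, b) - s a - s b
  odd : ∀ a k w, FlipWalk G y d a a k w → k % 2 = 1 → d ≤ w

/-- A walk in `G + ab` costs at least `d`, or can be shortened, keeping the number of flips modulo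
`2`, to one traversing the new edge at most once. -/
theorem FlipWalk.reduce {V : Type} {G G2 : SimpleGraph V} {y y2 : Sym2 V → ℤ} {d t : ℤ} {a b : V}
    (hb : ∀ e ∈ G.edgeSet, 0 ≤ y e ∧ y e ≤ d)
    (hodd : ∀ a k w, FlipWalk G y d a a k w → k % 2 = 1 → d ≤ w)
    (ht0 : 0 ≤ t) (htd : t ≤ d)
    (hG : ∀ x z, G2.Adj x z →
      (s(x, z) = s(a, b) ∧ y2 s(x, z) = t) ∨ (G.Adj x z ∧ y2 s(x, z) = y s(x, z)))
    {x z : V} {k : ℕ} {w : ℤ} (h : FlipWalk G2 y2 d x z k w) :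
    d ≤ w ∨ (∃ k' w', FlipWalk G y d x z k' w' ∧ k' % 2 = k % 2 ∧ w' ≤ w) ∨
      ∃ p q k1 w1 k2 w2 g c, (p = a ∧ q = b ∨ p = b ∧ q = a) ∧
        FlipWalk G y d x p k1 w1 ∧ FlipWalk G y d q z k2 w2 ∧
        (g = 0 ∧ c = t ∨ g = 1 ∧ c = d - t) ∧
        (k1 + g + k2) % 2 = k % 2 ∧ w1 + c + w2 ≤ w := by
  -- `main` treats both kinds of step at once: `g` counts the flip and `c` is the cost.
  have main : ∀ (u v : V) (k : ℕ) (w : ℤ) (g : ℕ) (c : ℤ), G2.Adj u v →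
      (g = 0 ∧ c = y2 s(u, v) ∨ g = 1 ∧ c = d - y2 s(u, v)) →
      (d ≤ w ∨ (∃ k' w', FlipWalk G y d x u k' w' ∧ k' % 2 = k % 2 ∧ w' ≤ w) ∨
        ∃ p q k1 w1 k2 w2 g c, (p = a ∧ q = b ∨ p = b ∧ q = a) ∧
        FlipWalk G y d x p k1 w1 ∧ FlipWalk G y d q u k2 w2 ∧
        (g = 0 ∧ c = t ∨ g = 1 ∧ c = d - t) ∧
        (k1 + g + k2) % 2 = k % 2 ∧ w1 + c + w2 ≤ w) →
      (d ≤ w + c ∨ (∃ k' w', FlipWalk G y d x v k' w' ∧ k' % 2 = (k + g) % 2 ∧ w' ≤ w + c) ∨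
        ∃ p q k1 w1 k2 w2 g' c', (p = a ∧ q = b ∨ p = b ∧ q = a) ∧
        FlipWalk G y d x p k1 w1 ∧ FlipWalk G y d q v k2 w2 ∧
        (g' = 0 ∧ c' = t ∨ g' = 1 ∧ c' = d - t) ∧
        (k1 + g' + k2) % 2 = (k + g) % 2 ∧ w1 + c' + w2 ≤ w + c) := by
    intro u v k w g c huv hgc hyp
    rcases hG u v huv with ⟨he, hyt⟩ | ⟨hadj, hye⟩
    · -- the step traverses the new edge
      rw [hyt] at hgc
      have hc0 : 0 ≤ c := by omega
      have huv' : u = a ∧ v = b ∨ u = b ∧ v = a := Sym2.eq_iff.1 he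
      rcases hyp with h | ⟨k', w', h1, h2, h3⟩ |
        ⟨p, q, k1, w1, k2, w2, g1, c1, hpq, h1, h2, h3, h4, h5⟩
      · exact Or.inl (by omega)
      · exact Or.inr (Or.inr ⟨u, v, k', w', 0, 0, g, c, huv', h1, .nil _, hgc, by omega, by omega⟩)
      · have hw1 := h1.nonneg hb
        have hw2 := h2.nonneg hb
        by_cases hg : g1 = g
        · -- both traversals are of the same kind
          by_cases hup : u = q
          · -- back and forth, with a loop `q → q` in between
            have hvp : v = p := by grind
            subst hup hvp
            by_cases hk2 : k2 % 2 = 1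
            · have := hodd _ _ _ h2 hk2
              exact Or.inl (by omega)
            · exact Or.inr (Or.inl ⟨k1, w1, h1, by omega, by omega⟩)
          · -- twice in the same direction
            have hup' : u = p := by grind
            have hvq : v = q := by grind
            subst hup' hvq
            exact Or.inr (Or.inl ⟨_, _, h1.trans h2.symm, by omega, by omega⟩)
        · -- traversals of different kinds cost `t + (d - t)` together
          exact Or.inl (by omega)
    · rw [hye] at hgc
      have hbe := hb _ (G.mem_edgeSet.2 hadj)
      have hstep : ∀ x0 k0 w0, FlipWalk G y d x0 u k0 w0 →
          FlipWalk G y d x0 v (k0 + g) (w0 + c) := by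
        intro x0 k0 w0 h0
        rcases hgc with ⟨rfl, rfl⟩ | ⟨rfl, rfl⟩
        · exact h0.keep hadj
        · exact h0.flip hadj
      rcases hyp with h | ⟨k', w', h1, h2, h3⟩ |
        ⟨p, q, k1, w1, k2, w2, g1, c1, hpq, h1, h2, h3, h4, h5⟩
      · exact Or.inl (by omega)
      · exact Or.inr (Or.inl ⟨_, _, hstep _ _ _ h1, by omega, by omega⟩)
      · exact Or.inr (Or.inr ⟨p, q, k1, w1, _, _, g1, c1, hpq, h1, hstep _ _ _ h2, h3, by omega,
          by omega⟩)
  induction h with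
  | nil => exact Or.inr (Or.inl ⟨0, 0, .nil _, rfl, le_rfl⟩)
  | keep _ hadj ih => simpa using main _ _ _ _ 0 _ hadj (Or.inl ⟨rfl, rfl⟩) ih
  | flip _ hadj ih => exact main _ _ _ _ 1 _ hadj (Or.inr ⟨rfl, rfl⟩) ih

/-- Feasibility extends to an additional edge `ab` of value `t`, provided that `t` has the right
parity and lies in the interval allowed by the walks from `a` to `b`. -/
theorem CutFeasible.add_edge {V : Type} {G G2 : SimpleGraph V} {y y2 : Sym2 V → ℤ} {d t : ℤ}
    {a b : V} (h : CutFeasible G y d) {s : V → ℤ}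
    (hs : ∀ a b, G.Adj a b → 2 ∣ y s(a, b) - s a - s b) (hst : 2 ∣ t - s a - s b)
    (ht0 : 0 ≤ t) (htd : t ≤ d)
    (heven : ∀ k w, FlipWalk G y d a b k w → k % 2 = 0 → t ≤ w)
    (hoddt : ∀ k w, FlipWalk G y d a b k w → k % 2 = 1 → d - t ≤ w)
    (hG : ∀ x z, G2.Adj x z →
      (s(x, z) = s(a, b) ∧ y2 s(x, z) = t) ∨ (G.Adj x z ∧ y2 s(x, z) = y s(x, z))) :
    CutFeasible G2 y2 d := by
  refine ⟨h.nonneg, ?_, ⟨s, ?_⟩, ?_⟩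
  · intro e he
    induction e using Sym2.ind with
    | _ x z =>
      rcases hG x z he with ⟨-, h2⟩ | ⟨h1, h2⟩
      · rw [h2]; exact ⟨ht0, htd⟩
      · rw [h2]; exact h.bounds _ h1
  · intro x z he
    rcases hG x z he with ⟨h1, h2⟩ | ⟨h1, h2⟩
    · rw [h2]
      rcases Sym2.eq_iff.1 h1 with ⟨rfl, rfl⟩ | ⟨rfl, rfl⟩
      · exact hst
      · rw [sub_right_comm]; exact hst
    · rw [h2]; exact hs _ _ h1
  · intro x k w hw hk
    rcases hw.reduce h.bounds h.odd ht0 htd hG with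
      h1 | ⟨k', w', h1, h2, h3⟩ | ⟨p, q, k1, w1, k2, w2, g, c, hpq, h1, h2, h3, h4, h5⟩
    · exact h1
    · exact (h.odd _ _ _ h1 (by omega)).trans h3
    · -- closing up outside the new edge gives a walk between its ends
      have hab : FlipWalk G y d a b (k1 + k2) (w1 + w2) := by
        rcases hpq with ⟨rfl, rfl⟩ | ⟨rfl, rfl⟩
        · rw [add_comm k1, add_comm w1]; exact (h2.trans h1).symm
        · rw [add_comm k1, add_comm w1]; exact h2.trans h1
      rcases h3 with ⟨rfl, rfl⟩ | ⟨rfl, rfl⟩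
      · have := hoddt _ _ hab (by omega); omega
      · have := heven _ _ hab (by omega); omega

/-- If `a` and `b` are joined by a path `a v b`, the interval of values allowed for a new edge `ab`
contains an integer of the right parity: the least cost of a walk from `a` to `b` with evenly many
flips or, if that exceeds `d`, one of `d` and `d - 1`. -/
theorem CutFeasible.exists_value {V : Type} {G : SimpleGraph V} {y : Sym2 V → ℤ} {d : ℤ}
    {a b v : V} (h : CutFeasible G y d) {s : V → ℤ}
    (hs : ∀ a b, G.Adj a b → 2 ∣ y s(a, b) - s a - s b)
    (ha : G.Adj v a) (hb : G.Adj v b) :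
    ∃ t, 2 ∣ t - s a - s b ∧ 0 ≤ t ∧ t ≤ d ∧
      (∀ k w, FlipWalk G y d a b k w → k % 2 = 0 → t ≤ w) ∧
      (∀ k w, FlipWalk G y d a b k w → k % 2 = 1 → d - t ≤ w) := by
  have hw0 := ((FlipWalk.keep_one (y := y) (d := d) ha).symm).trans (FlipWalk.keep_one hb)
  obtain ⟨D, ⟨k0, hk0, hD⟩, hmin⟩ := Int.exists_least_of_bdd
    (P := fun w => ∃ k, k % 2 = 0 ∧ FlipWalk G y d a b k w)
    ⟨0, fun w ⟨_, _, hw⟩ => hw.nonneg h.bounds⟩ ⟨_, _, rfl, hw0⟩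
  have hD0 := hD.nonneg h.bounds
  by_cases hDd : D ≤ d
  · refine ⟨D, ?_, hD0, hDd, fun k w hw hk => hmin w ⟨k, hk, hw⟩, fun k w hw hk => ?_⟩
    · obtain ⟨p, hp⟩ := hD.parity hs
      obtain ⟨m, rfl⟩ : 2 ∣ k0 := by omega
      exact ⟨p + m * d, by push_cast at hp; linear_combination hp⟩
    · have := h.odd _ _ _ (hD.trans hw.symm) (by omega)
      omega
  · have hd := h.nonneg
    have h1 := hmin _ ⟨_, rfl, hw0⟩
    have h2 := h.bounds _ (G.mem_edgeSet.2 ha)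
    have h3 := h.bounds _ (G.mem_edgeSet.2 hb)
    have hev : ∀ k w, FlipWalk G y d a b k w → k % 2 = 0 → d ≤ w := by
      intro k w hw hk
      have := hmin w ⟨k, hk, hw⟩
      omega
    by_cases hpar : 2 ∣ d - s a - s b
    · refine ⟨d, hpar, hd, le_rfl, hev, fun k w hw _ => ?_⟩
      have := hw.nonneg h.bounds
      omega
    · refine ⟨d - 1, by omega, by omega, by omega, fun k w hw hk => ?_, fun k w hw hk => ?_⟩
      · have := hev k w hw hk
        omega
      · -- such a walk has odd cost, so its cost is not `0`
        have h0 := hw.nonneg h.bounds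
        obtain ⟨p, hp⟩ := hw.parity hs
        obtain ⟨m, hm⟩ : ∃ m : ℕ, k = 2 * m + 1 := ⟨k / 2, by omega⟩
        have hw' : w - d - s a - s b = 2 * (p + m * d) := by
          rw [hm] at hp
          push_cast at hp
          linear_combination hp
        generalize p + m * d = r at hw'
        omega

/-! ### Families of cuts -/

theorem cutVec_mk {V : Type} (A : Set V) (x z : V) [Decidable (x ∈ A ↔ z ∈ A)] :
    cutVec A s(x, z) = if (x ∈ A ↔ z ∈ A) then 0 else 1 := by
  simp [cutVec]

theorem cutVec_eq {V : Type} (A : Set V) (x z : V) :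
    cutVec A s(x, z) = 0 ∨ cutVec A s(x, z) = 1 := by
  classical
  rw [cutVec_mk]
  split_ifs <;> simp

/-- A family of cuts can be changed at the vertex `v` only, so that `v` is separated from `a`
precisely in the cuts indexed by `X`. -/
theorem exists_move {V : Type} {d : ℕ} (A : Fin d → Set V) (v a : V) (X : Finset (Fin d)) :
    ∃ A' : Fin d → Set V,
      (∀ i x z, x ≠ v → z ≠ v → cutVec (A' i) s(x, z) = cutVec (A i) s(x, z)) ∧
      ∀ i z, z ≠ v → cutVec (A' i) s(v, z) =
        if i ∈ X then 1 - cutVec (A i) s(a, z) else cutVec (A i) s(a, z) := by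
  classical
  refine ⟨fun i => {x | if x = v then (a ∈ A i ↔ i ∉ X) else x ∈ A i}, ?_, ?_⟩
  · intro i x z hx hz
    simp [cutVec_mk, hx, hz]
  · intro i z hz
    simp only [cutVec_mk, Set.mem_ofPred_eq, hz, if_true, if_false]
    by_cases h1 : a ∈ A i <;> by_cases h2 : z ∈ A i <;> by_cases h3 : i ∈ X <;>
      simp [h1, h2, h3]

/-- The triangle case with one side prescribed: given cuts of which exactly `t` separate `a` from
`b`, the vertex `v` can be placed so that `p` cuts separate it from `a` and `q` from `b`, provided
that `p`, `q`, `t` satisfy the triangle and perimeter inequalities and have even sum. -/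
theorem exists_glue {V : Type} {d : ℕ} (A : Fin d → Set V) {v a b : V} (ha : a ≠ v) (hb : b ≠ v)
    {p q t : ℤ} (ht : t = ∑ i, cutVec (A i) s(a, b)) (h1 : p ≤ q + t) (h2 : q ≤ p + t)
    (h3 : t ≤ p + q) (h4 : p + q + t ≤ 2 * d) (h5 : 2 ∣ p + q + t) :
    ∃ A' : Fin d → Set V,
      (∀ i x z, x ≠ v → z ≠ v → cutVec (A' i) s(x, z) = cutVec (A i) s(x, z)) ∧
      p = ∑ i, cutVec (A' i) s(v, a) ∧ q = ∑ i, cutVec (A' i) s(v, b) := by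
  classical
  set S : Finset (Fin d) := Finset.univ.filter (fun i => cutVec (A i) s(a, b) = 1) with hS
  have hSi : ∀ i, cutVec (A i) s(a, b) = if i ∈ S then 1 else 0 := by
    intro i
    rcases cutVec_eq (A i) a b with h | h <;> simp [hS, h]
  have hSc : (S.card : ℤ) = t := by
    rw [ht]
    simp [hSi]
  have hSc' : (Sᶜ.card : ℤ) = d - t := by
    have := Finset.card_add_card_compl S
    rw [Fintype.card_fin] at this
    omega
  -- `v` is separated from `a` in `(t + p - q) / 2` cuts separating `a` from `b`, and in
  -- `(p + q - t) / 2` of the others.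
  obtain ⟨X1, hX1, hc1⟩ := Finset.exists_subset_card_eq
    (show ((t + p - q) / 2).toNat ≤ S.card by omega)
  obtain ⟨X2, hX2, hc2⟩ := Finset.exists_subset_card_eq
    (show ((p + q - t) / 2).toNat ≤ Sᶜ.card by omega)
  obtain ⟨A', hA1, hA2⟩ := exists_move A v a (X1 ∪ X2)
  refine ⟨A', hA1, ?_, ?_⟩
  · have : ∀ i, cutVec (A' i) s(v, a) = (if i ∈ X1 then 1 else 0) + (if i ∈ X2 then 1 else 0) := by
      intro i
      rw [hA2 i a ha]
      have h6 : i ∈ X1 → i ∈ S := fun h => hX1 h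
      have h7 : i ∈ X2 → i ∉ S := fun h => by simpa using hX2 h
      have h8 : cutVec (A i) s(a, a) = 0 := by simp [cutVec_mk]
      rw [h8]
      by_cases h9 : i ∈ X1 <;> by_cases h10 : i ∈ X2
      · exact absurd (h6 h9) (h7 h10)
      all_goals simp [h9, h10]
    simp only [this, Finset.sum_add_distrib]
    simp
    omega
  · have : ∀ i, cutVec (A' i) s(v, b) =
        (if i ∈ S then 1 else 0) + (if i ∈ X2 then 1 else 0) - (if i ∈ X1 then 1 else 0) := by
      intro i
      rw [hA2 i b hb, hSi]
      have h6 : i ∈ X1 → i ∈ S := fun h => hX1 h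
      have h7 : i ∈ X2 → i ∉ S := fun h => by simpa using hX2 h
      by_cases h9 : i ∈ X1 <;> by_cases h10 : i ∈ X2
      · exact absurd (h6 h9) (h7 h10)
      · simp [h9, h10, h6 h9]
      · simp [h9, h10, h7 h10]
      · simp [h9, h10]
    simp only [this, Finset.sum_add_distrib, Finset.sum_sub_distrib]
    simp
    omega

/-- The graph obtained by deleting all edges at `v`. -/
def isolate {V : Type} (G : SimpleGraph V) (v : V) : SimpleGraph V where
  Adj x z := x ≠ v ∧ z ≠ v ∧ G.Adj x z
  symm := ⟨fun _ _ h => ⟨h.2.1, h.1, h.2.2.symm⟩⟩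
  loopless := ⟨fun _ h => h.2.2.ne rfl⟩

/-- On a graph without `K₄` minor, every feasible `(y, d)` is a sum of `d` cuts. -/
theorem CutFeasible.exists_cuts {V : Type} [Finite V] {d : ℕ} (N : ℕ) :
    ∀ (G : SimpleGraph V) (y : Sym2 V → ℤ), G.support.ncard = N →
      ¬ GraphMinor (⊤ : SimpleGraph (Fin 4)) G → CutFeasible G y d →
      ∃ A : Fin d → Set V, ∀ x z, G.Adj x z → y s(x, z) = ∑ i, cutVec (A i) s(x, z) := by
  classical
  induction N using Nat.strong_induction_on with
  | _ N IH =>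
  intro G y hN hK h
  by_cases hE : ∃ x z, G.Adj x z
  swap
  · exact ⟨fun _ => ∅, fun x z hxz => (hE ⟨x, z, hxz⟩).elim⟩
  obtain ⟨x0, z0, hxz0⟩ := hE
  obtain ⟨v, u, hvu, a, b, hab⟩ : ∃ v u, G.Adj v u ∧ ∃ a b, ∀ c, G.Adj v c → c = a ∨ c = b := by
    by_contra! hcon
    exact hK (k4_of_minDegree hxz0 hcon)
  have hlt : ∀ G2 : SimpleGraph V, (∀ x z, G2.Adj x z → x ≠ v ∧ x ∈ G.support) →
      G2.support.ncard < N := by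
    intro G2 h2
    rw [← hN]
    refine Set.ncard_lt_ncard ?_ (Set.toFinite _)
    refine Set.ssubset_iff_of_subset ?_ |>.2 ⟨v, ⟨u, hvu⟩, fun ⟨z, hz⟩ => (h2 _ _ hz).1 rfl⟩
    rintro x ⟨z, hz⟩
    exact (h2 _ _ hz).2
  obtain ⟨s, hs⟩ := h.parity
  by_cases hdeg : G.Adj v a ∧ G.Adj v b ∧ a ≠ b
  · -- `v` has exactly the two neighbours `a` and `b`
    obtain ⟨ha, hb, hne⟩ := hdeg
    obtain ⟨t, hst, ht0, htd, heven, hodd⟩ := h.exists_value hs ha hb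
    let y2 : Sym2 V → ℤ := fun e => if e = s(a, b) then t else y e
    have hG : ∀ x z, (bypass G v a b).Adj x z →
        (s(x, z) = s(a, b) ∧ y2 s(x, z) = t) ∨ (G.Adj x z ∧ y2 s(x, z) = y s(x, z)) := by
      rintro x z ⟨_, _, _, h4⟩
      by_cases he : s(x, z) = s(a, b)
      · exact Or.inl ⟨he, if_pos he⟩
      · exact Or.inr ⟨h4.resolve_right he, if_neg he⟩
    have hfeas := h.add_edge hs hst ht0 htd heven hodd hG
    have hsup : ∀ x z, (bypass G v a b).Adj x z → x ≠ v ∧ x ∈ G.support := by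
      rintro x z ⟨hx, _, _, h4 | h4⟩
      · exact ⟨hx, z, h4⟩
      · rcases Sym2.eq_iff.1 h4 with ⟨rfl, -⟩ | ⟨rfl, -⟩
        · exact ⟨hx, v, ha.symm⟩
        · exact ⟨hx, v, hb.symm⟩
    obtain ⟨A, hA⟩ := IH _ (hlt _ hsup) (bypass G v a b) y2 rfl
      (fun hm => hK (minor_of_bypass ha hb hm)) hfeas
    have hy2 : y2 s(a, b) = t := if_pos rfl
    -- the walks `a v b` with the four choices of flips give the triangle inequalities
    have hav : FlipWalk G y d a v 0 (y s(v, a)) := (FlipWalk.keep_one ha).symm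
    have hav' : FlipWalk G y d a v 1 (d - y s(v, a)) := (FlipWalk.flip_one ha).symm
    have i1 := heven _ _ (hav.trans (FlipWalk.keep_one hb)) rfl
    have i2 := heven _ _ (hav'.trans (FlipWalk.flip_one hb)) rfl
    have i3 := hodd _ _ (hav.trans (FlipWalk.flip_one hb)) rfl
    have i4 := hodd _ _ (hav'.trans (FlipWalk.keep_one hb)) rfl
    have pa := hs _ _ ha
    have pb := hs _ _ hb
    obtain ⟨A', hA1, hA2, hA3⟩ := exists_glue A ha.ne' hb.ne' (p := y s(v, a)) (q := y s(v, b))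
      (hy2 ▸ hA a b ⟨ha.ne', hb.ne', hne, Or.inr rfl⟩)
      (by omega) (by omega) (by omega) (by omega) (by omega)
    have hvz : ∀ z, G.Adj v z → y s(v, z) = ∑ i, cutVec (A' i) s(v, z) := by
      intro z hz
      rcases hab z hz with rfl | rfl
      · exact hA2
      · exact hA3
    refine ⟨A', fun x z hxz => ?_⟩
    by_cases hx : x = v
    · subst hx; exact hvz z hxz
    by_cases hz : z = v
    · subst hz
      rw [Sym2.eq_swap]
      exact hvz x hxz.symm
    · simp only [hA1 _ x z hx hz]
      rw [← hA x z ⟨hx, hz, hxz.ne, Or.inl hxz⟩]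
      by_cases he : s(x, z) = s(a, b)
      · -- if `ab` is already an edge, its value is forced to be `t`
        have hadj : G.Adj a b := by
          rw [← G.mem_edgeSet, ← he]; exact hxz
        rw [he, hy2]
        have j1 := heven _ _ (FlipWalk.keep_one hadj) rfl
        have j2 := hodd _ _ (FlipWalk.flip_one hadj) rfl
        omega
      · exact (if_neg he).symm
  · -- `v` has a single neighbour
    have huniq : ∀ c, G.Adj v c → c = u := by
      intro c hc
      rcases hab c hc with rfl | rfl <;> rcases hab u hvu with rfl | rfl <;> grind
    have hmono : ∀ x z, (isolate G v).Adj x z → G.Adj x z := fun x z hxz => hxz.2.2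
    have hwalk : ∀ x z k w, FlipWalk (isolate G v) y d x z k w → FlipWalk G y d x z k w := by
      intro x z k w hw
      induction hw with
      | nil => exact .nil _
      | keep _ hadj ih => exact ih.keep (hmono _ _ hadj)
      | flip _ hadj ih => exact ih.flip (hmono _ _ hadj)
    have hfeas : CutFeasible (isolate G v) y d := by
      refine ⟨h.nonneg, ?_, ⟨s, fun x z hxz => hs x z (hmono _ _ hxz)⟩,
        fun x k w hw => h.odd x k w (hwalk _ _ _ _ hw)⟩
      intro e he
      induction e using Sym2.ind with
      | _ x z => exact h.bounds _ (G.mem_edgeSet.2 (hmono _ _ he))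
    obtain ⟨A, hA⟩ := IH _ (hlt (isolate G v) fun x z hxz => ⟨hxz.1, z, hxz.2.2⟩) (isolate G v) y rfl
      (fun hm => hK (hm.mono' hmono)) hfeas
    have hbu := h.bounds _ (G.mem_edgeSet.2 hvu)
    obtain ⟨X, -, hX⟩ := Finset.exists_subset_card_eq
      (show (y s(v, u)).toNat ≤ (Finset.univ : Finset (Fin d)).card by
        rw [Finset.card_univ, Fintype.card_fin]; omega)
    obtain ⟨A', hA1, hA2⟩ := exists_move A v u X
    have hvz : y s(v, u) = ∑ i, cutVec (A' i) s(v, u) := by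
      have : ∀ i, cutVec (A' i) s(v, u) = if i ∈ X then 1 else 0 := by
        intro i
        rw [hA2 i u hvu.ne']
        simp [cutVec_mk]
      simp only [this]
      simp
      omega
    refine ⟨A', fun x z hxz => ?_⟩
    by_cases hx : x = v
    · subst hx
      rw [huniq z hxz]
      exact hvz
    by_cases hz : z = v
    · subst hz
      rw [Sym2.eq_swap, huniq x hxz.symm]
      exact hvz
    · simp only [hA1 _ x z hx hz]
      exact hA x z ⟨hx, hz, hxz⟩

/-! ### From the cut monoid to the inequalities -/

open Classical in
/-- Extension by `0` of a vector indexed by edges to all pairs of vertices. -/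
noncomputable def extendEdge {V : Type} (G : SimpleGraph V) (p : G.edgeSet → ℤ) : Sym2 V → ℤ :=
  fun e => if h : e ∈ G.edgeSet then p ⟨e, h⟩ else 0

theorem extendEdge_of_mem {V : Type} {G : SimpleGraph V} (p : G.edgeSet → ℤ) {e : Sym2 V}
    (he : e ∈ G.edgeSet) : extendEdge G p e = p ⟨e, he⟩ :=
  dif_pos he

/-- Elements of the cut monoid satisfy the inequalities in `CutFeasible`. For a generator
`(δ_A, 1)` the last one holds since a closed walk with an odd number of flips has odd cost. -/
theorem bounds_of_mem_cutMonoid {V : Type} {G : SimpleGraph V} {m : (G.edgeSet → ℤ) × ℤ}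
    (hm : m ∈ cutMonoid G) :
    0 ≤ m.2 ∧ (∀ e, 0 ≤ m.1 e ∧ m.1 e ≤ m.2) ∧
      ∀ a k w, FlipWalk G (extendEdge G m.1) m.2 a a k w → k % 2 = 1 → m.2 ≤ w := by
  classical
  induction hm using AddSubmonoid.closure_induction with
  | mem m hm =>
    obtain ⟨A, rfl⟩ := hm
    have hb : ∀ e : Sym2 V, 0 ≤ cutVec A e ∧ cutVec A e ≤ 1 := by
      intro e
      induction e using Sym2.ind with
      | _ x z => rcases cutVec_eq A x z with h | h <;> simp [h]
    refine ⟨by simp, fun e => hb e.1, ?_⟩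
    intro a k w hw hk
    have h0 := hw.nonneg (fun e he => by rw [extendEdge_of_mem _ he]; exact hb e)
    have hp := hw.parity (s := fun x => if x ∈ A then 1 else 0) (by
      intro x z hxz
      rw [extendEdge_of_mem _ (G.mem_edgeSet.2 hxz)]
      simp only [cutVec_mk]
      by_cases h1 : x ∈ A <;> by_cases h2 : z ∈ A <;> simp [h1, h2])
    dsimp only at hp h0 ⊢
    split_ifs at hp <;> omega
  | zero =>
    refine ⟨le_rfl, fun e => ⟨le_rfl, le_rfl⟩, ?_⟩
    intro a k w hw _
    exact hw.nonneg (fun e he => by rw [extendEdge_of_mem _ he]; exact ⟨le_rfl, le_rfl⟩)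
  | add m m' _ _ ih ih' =>
    refine ⟨add_nonneg ih.1 ih'.1, fun e => ?_, ?_⟩
    · have h1 := ih.2.1 e
      have h2 := ih'.2.1 e
      simp only [Prod.fst_add, Prod.snd_add, Pi.add_apply]
      omega
    · intro a k w hw hk
      obtain ⟨w1, w2, rfl, h1, h2⟩ := hw.split (y1 := extendEdge G m.1) (y2 := extendEdge G m'.1)
        (fun e he => by simp [extendEdge_of_mem _ he]) (Prod.snd_add m m')
      exact add_le_add (ih.2.2 _ _ _ h1 hk) (ih'.2.2 _ _ _ h2 hk)

/-- An element of the cut group is modulo `2` a sum of cut vectors; `s u` counts, with sign,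
the sets that contain `u`. -/
theorem parity_of_mem_cutGroup {V : Type} {G : SimpleGraph V} {m : (G.edgeSet → ℤ) × ℤ}
    (hm : m ∈ cutGroup G) :
    ∃ s : V → ℤ, ∀ x z, G.Adj x z → 2 ∣ extendEdge G m.1 s(x, z) - s x - s z := by
  classical
  induction hm using AddSubgroup.closure_induction with
  | mem m hm =>
    obtain ⟨A, rfl⟩ := hm
    refine ⟨fun x => if x ∈ A then 1 else 0, fun x z hxz => ?_⟩
    rw [extendEdge_of_mem _ (G.mem_edgeSet.2 hxz)]
    simp only [cutVec_mk]
    by_cases h1 : x ∈ A <;> by_cases h2 : z ∈ A <;> simp [h1, h2]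
  | zero =>
    refine ⟨0, fun x z hxz => ?_⟩
    rw [extendEdge_of_mem _ (G.mem_edgeSet.2 hxz)]
    simp
  | add m m' _ _ ih ih' =>
    obtain ⟨s, hs⟩ := ih
    obtain ⟨s', hs'⟩ := ih'
    refine ⟨s + s', fun x z hxz => ?_⟩
    have h1 := hs x z hxz
    have h2 := hs' x z hxz
    rw [extendEdge_of_mem _ (G.mem_edgeSet.2 hxz)] at h1 h2 ⊢
    simp only [Prod.fst_add, Pi.add_apply]
    omega
  | neg m _ ih =>
    obtain ⟨s, hs⟩ := ih
    refine ⟨-s, fun x z hxz => ?_⟩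
    have h1 := hs x z hxz
    rw [extendEdge_of_mem _ (G.mem_edgeSet.2 hxz)] at h1 ⊢
    simp only [Prod.fst_neg, Pi.neg_apply]
    omega

/-- The cut monoid of an outerplanar graph (no `K₄` minor and no
`K_{2,3}` minor) is normal. -/
theorem outerplanar_cutNormal {V : Type} [Fintype V] (G : SimpleGraph V)
    (hK4 : ¬ GraphMinor (⊤ : SimpleGraph (Fin 4)) G)
    (hK23 : ¬ GraphMinor (completeBipartiteGraph (Fin 2) (Fin 3)) G) :
    CutNormal G := by
  intro x hx ⟨n, hn, hnx⟩
  obtain ⟨h1, h2, h3⟩ := bounds_of_mem_cutMonoid hnx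
  have hn' : (0 : ℤ) < n := by omega
  have hfeas : CutFeasible G (extendEdge G x.1) x.2 := by
    refine ⟨?_, ?_, parity_of_mem_cutGroup hx, ?_⟩
    · have h : (0 : ℤ) ≤ n * x.2 := by simpa using h1
      exact nonneg_of_mul_nonneg_right h hn'
    · intro e he
      rw [extendEdge_of_mem _ he]
      have h := h2 ⟨e, he⟩
      rw [Prod.smul_fst, Prod.smul_snd, Pi.smul_apply, nsmul_eq_mul, nsmul_eq_mul] at h
      exact ⟨nonneg_of_mul_nonneg_right h.1 hn', le_of_mul_le_mul_left h.2 hn'⟩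
    · intro a k w hw hk
      have hw' := hw.scale (n := n) (y' := extendEdge G (n • x).1)
        (fun e he => by simp [extendEdge_of_mem _ he])
      have h := h3 a k _ (by simpa using hw') hk
      rw [Prod.smul_snd, nsmul_eq_mul] at h
      exact le_of_mul_le_mul_left h hn'
  obtain ⟨d, hd⟩ := Int.eq_ofNat_of_zero_le hfeas.nonneg
  rw [hd] at hfeas
  obtain ⟨A, hA⟩ := hfeas.exists_cuts _ G _ rfl hK4
  have hxsum : x = ∑ i, ((fun e => cutVec (A i) e.1, 1) : (G.edgeSet → ℤ) × ℤ) := by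
    refine Prod.ext ?_ ?_
    · funext ⟨e, he⟩
      rw [Prod.fst_sum, Finset.sum_apply, ← extendEdge_of_mem x.1 he]
      induction e using Sym2.ind with
      | _ u v => exact hA u v he
    · rw [Prod.snd_sum, hd]
      simp
  rw [hxsum]
  exact AddSubmonoid.sum_mem _ fun i _ => AddSubmonoid.subset_closure ⟨A i, rfl⟩
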